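/- arXiv:2404.19465 — 8 statements merged into one kernel-verified Lean document; each statement's English description precedes it below -/
import Mathlib

section
/- Let P and Q be probability measures on ℝ such that the moment generating functions β ↦ ∫ exp(β x) dP(x) and β ↦ ∫ exp(β x) dQ(x) are finite for all β in some open neighborhood of 0, and suppose ∫ x dP(x) = ∫ x dQ(x). If there exists ε > 0 such that ∫ exp(β x) dQ(x) ≤ ∫ exp(β x) dP(x) for all β with |β| < ε, then ∫ x² dQ(x) ≤ ∫ x² dP(x); equivalently, the variance of Q is at most the variance of P. (This is the 'local e-variable implies variance domination' direction of the local existence result: if the likelihood ratio of Q to P is a local e-variable around the common mean, then the variance of the null family dominates that of the alternative family at that mean.) -/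
/-!
The difference `f = mgf P - mgf Q` is analytic near `0`, nonnegative near `0`, and satisfies
`f 0 = 0` (equal masses) and `f'' 0 = ∫ x² dP - ∫ x² dQ`. Thus `0` is a local minimum of `f`, and
the second-order necessary condition `0 ≤ f'' 0` is the claim.
-/

open MeasureTheory Real

open Filter Topology in
/-- Second-order necessary condition for a local minimum. Differentiability is not assumed:
a junk value of `deriv (deriv f) a` is `0`, for which the conclusion holds. -/
lemma IsLocalMin.deriv_deriv_nonneg_of_continuousAt {f : ℝ → ℝ} {a : ℝ} (h : IsLocalMin f a)
    (hc : ContinuousAt f a) : 0 ≤ deriv (deriv f) a := by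
  by_contra! hneg
  -- A negative second derivative makes `a` a local maximum too, so `f` is constant near `a`.
  have hmax : IsLocalMax f a := isLocalMax_of_deriv_deriv_neg hneg h.deriv_eq_zero hc
  have hconst : f =ᶠ[𝓝 a] fun _ => f a := by
    filter_upwards [h, hmax] with x h₁ h₂ using le_antisymm h₂ h₁
  have := hconst.deriv.deriv_eq
  simp at this
  linarith

open ProbabilityTheory in
lemma zero_mem_interior_integrableExpSet_id {μ : Measure ℝ} {δ : ℝ} (hδ : 0 < δ)
    (h : ∀ β : ℝ, |β| < δ → Integrable (fun x => Real.exp (β * x)) μ) :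
    (0 : ℝ) ∈ interior (integrableExpSet id μ) := by
  rw [mem_interior_iff_mem_nhds, Metric.mem_nhds_iff]
  refine ⟨δ, hδ, fun β hβ => h β ?_⟩
  simpa using hβ

/-- If `P` and `Q` are probability measures on `ℝ` with moment generating
functions finite on a neighborhood of `0` and equal means, and the MGF of `Q` is
dominated by that of `P` on a neighborhood of `0` (i.e. the likelihood ratio of `Q` to
`P` is a local e-variable around the common mean), then the second moment (equivalently,
variance) of `Q` is at most that of `P`. -/
theorem secondMoment_le_of_local_mgf_domination
    (P Q : Measure ℝ) [IsProbabilityMeasure P] [IsProbabilityMeasure Q]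
    (δ : ℝ) (hδ : 0 < δ)
    (hPmgf : ∀ β : ℝ, |β| < δ → Integrable (fun x => Real.exp (β * x)) P)
    (hQmgf : ∀ β : ℝ, |β| < δ → Integrable (fun x => Real.exp (β * x)) Q)
    (hmean : ∫ x, x ∂P = ∫ x, x ∂Q)
    (ε : ℝ) (hε : 0 < ε)
    (hdom : ∀ β : ℝ, |β| < ε →
      ∫ x, Real.exp (β * x) ∂Q ≤ ∫ x, Real.exp (β * x) ∂P) :
    ∫ x, x ^ 2 ∂Q ≤ ∫ x, x ^ 2 ∂P := by
  have hP := zero_mem_interior_integrableExpSet_id hδ hPmgf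
  have hQ := zero_mem_interior_integrableExpSet_id hδ hQmgf
  have aP := ProbabilityTheory.analyticAt_mgf hP
  have aQ := ProbabilityTheory.analyticAt_mgf hQ
  set f : ℝ → ℝ := ProbabilityTheory.mgf id P - ProbabilityTheory.mgf id Q with hf
  have hmin : IsLocalMin f 0 := by
    filter_upwards [Metric.ball_mem_nhds (0 : ℝ) hε] with β hβ
    have := hdom β (by simpa using hβ)
    simpa [hf, ProbabilityTheory.mgf] using this
  have h2 : deriv (deriv f) 0 = ∫ x, x ^ 2 ∂P - ∫ x, x ^ 2 ∂Q := by
    have h := iteratedDeriv_sub (n := 2) (x := (0 : ℝ)) aP.contDiffAt aQ.contDiffAt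
    rw [ProbabilityTheory.iteratedDeriv_mgf_zero hP, ProbabilityTheory.iteratedDeriv_mgf_zero hQ,
      iteratedDeriv_succ, iteratedDeriv_one] at h
    simpa using h
  have := hmin.deriv_deriv_nonneg_of_continuousAt (aP.sub aQ).continuousAt
  linarith
end

section
/- Let M ⊆ ℝ^d be open and convex, let μ' ∈ M, and let ψ : M → ℝ^d be continuously differentiable with ψ(μ') = 0, with (total) derivative Dψ(μ) at each μ ∈ M. Suppose that for all μ ∈ M one has ⟨μ − μ', Dψ(μ)(μ − μ')⟩ ≤ 0. Then ⟨ψ(μ), μ − μ'⟩ ≤ 0 for all μ ∈ M. -/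
/-! Restrict `ψ` to the segment from `μ'` to `μ`: with `v = μ - μ'`, the function
`t ↦ ⟪ψ (μ' + t • v), v⟫` vanishes at `0` and has derivative `⟪Dψ (μ' + t • v) v, v⟫`, which is
nonpositive for `t > 0` by homogeneity of the quadratic form. Hence it is antitone on `[0, 1]`,
and its value at `1` is the inner product in question.
-/

open Real RealInnerProductSpace

/-- Let `M ⊆ ℝ^d` be open and convex, `μ' ∈ M`, and `ψ : M → ℝ^d`
continuously differentiable with `ψ(μ') = 0` and derivative `Dψ(μ)` at each `μ ∈ M`.
If `⟨μ − μ', Dψ(μ)(μ − μ')⟩ ≤ 0` for all `μ ∈ M`, then `⟨ψ(μ), μ − μ'⟩ ≤ 0` on `M`. -/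
theorem inner_nonpos_of_derivative_quadform_nonpos
    (d : ℕ) (M : Set (EuclideanSpace ℝ (Fin d)))
    (hM : IsOpen M) (hMconv : Convex ℝ M)
    (μ' : EuclideanSpace ℝ (Fin d)) (hμ' : μ' ∈ M)
    (ψ : EuclideanSpace ℝ (Fin d) → EuclideanSpace ℝ (Fin d))
    (Dψ : EuclideanSpace ℝ (Fin d) →
      (EuclideanSpace ℝ (Fin d) →L[ℝ] EuclideanSpace ℝ (Fin d)))
    (hdiff : ∀ μ ∈ M, HasFDerivAt ψ (Dψ μ) μ)
    (hcont : ContinuousOn Dψ M)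
    (hψμ' : ψ μ' = 0)
    (hquad : ∀ μ ∈ M, ⟪μ - μ', Dψ μ (μ - μ')⟫ ≤ 0) :
    ∀ μ ∈ M, ⟪ψ μ, μ - μ'⟫ ≤ 0 := by
  intro μ hμ
  set v := μ - μ' with hv
  have hmem : ∀ t ∈ Set.Icc (0 : ℝ) 1, μ' + t • v ∈ M := fun t ht =>
    hMconv.add_smul_sub_mem hμ' hμ ht
  have hderiv : ∀ t ∈ Set.Icc (0 : ℝ) 1,
      HasDerivAt (fun s : ℝ => ⟪ψ (μ' + s • v), v⟫) ⟪Dψ (μ' + t • v) v, v⟫ t := by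
    intro t ht
    have hline : HasDerivAt (fun s : ℝ => μ' + s • v) v t := by
      simpa using ((hasDerivAt_id t).smul_const v).const_add μ'
    have hψ := (hdiff _ (hmem t ht)).comp_hasDerivAt t hline
    simpa using hψ.inner ℝ (hasDerivAt_const t v)
  have hanti : AntitoneOn (fun s : ℝ => ⟪ψ (μ' + s • v), v⟫) (Set.Icc 0 1) := by
    refine antitoneOn_of_hasDerivWithinAt_nonpos (convex_Icc 0 1)
      (fun t ht => (hderiv t ht).continuousAt.continuousWithinAt)
      (fun t ht => (hderiv t (interior_subset ht)).hasDerivWithinAt) ?_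
    intro t ht
    have ht0 : 0 < t := by
      rw [interior_Icc] at ht
      exact ht.1
    -- At `μ' + t • v` the displacement from `μ'` is `t • v`, so the hypothesis is
    -- `t ^ 2` times the desired inequality.
    have hq := hquad _ (hmem t (interior_subset ht))
    rw [add_sub_cancel_left, map_smul, real_inner_smul_left, real_inner_smul_right,
      ← mul_assoc, real_inner_comm] at hq
    exact nonpos_of_mul_nonpos_right hq (mul_pos ht0 ht0)
  have h01 := hanti (Set.left_mem_Icc.2 zero_le_one) (Set.right_mem_Icc.2 zero_le_one) zero_le_one
  simpa [hψμ', hv] using h01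
end

section
/- Fix k ≥ 1, λ > 0, and μ_1, …, μ_k > 0, and set μ̄ = (μ_1 + … + μ_k)/k. Let poi(θ, y) := exp(−θ) θ^y / y! denote the Poisson probability mass function. Then the k-sample Poisson likelihood ratio statistic has expectation exactly 1 under every i.i.d. Poisson null: Σ_{y ∈ ℕ^k} (∏_{i=1}^k poi(λ, y_i)) · (∏_{i=1}^k poi(μ_i, y_i) / poi(μ̄, y_i)) = 1. -/
open Real Finset

/-- The Poisson probability mass function with mean `θ` evaluated at `y`. -/
noncomputable def poi (θ : ℝ) (y : ℕ) : ℝ :=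
  Real.exp (-θ) * θ ^ y / (Nat.factorial y : ℝ)

/-!
The summand is a product over the coordinates, so the sum over `ℕ^k` factors into `k` exponential
series (`hasSum_pi_prod`). With `m` the mean of the `μ i`, the `i`-th factor sums to
`exp ((lam / m - 1) * (μ i - m))` (`hasSum_poi_tilt`). The product of these is `1`, because the
deviations `μ i - m` sum to zero.
-/

lemma HasSum.mul_nonneg_prod {α β : Type*} {f : α → ℝ} {g : β → ℝ} {a b : ℝ}
    (hf : HasSum f a) (hg : HasSum g b) (hf0 : ∀ x, 0 ≤ f x) (hg0 : ∀ y, 0 ≤ g y) :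
    HasSum (fun p : α × β => f p.1 * g p.2) (a * b) := by
  have hs := hf.summable.mul_of_nonneg hg.summable hf0 hg0
  exact hf.mul hg hs

/-- Distributivity of a finite product of nonnegative series over all index tuples.
Nonnegativity supplies the absolute convergence needed to
multiply the series one coordinate at a time. -/
lemma hasSum_pi_prod {k : ℕ} (f : Fin k → ℕ → ℝ) (a : Fin k → ℝ)
    (hf : ∀ i n, 0 ≤ f i n) (h : ∀ i, HasSum (f i) (a i)) :
    HasSum (fun y : Fin k → ℕ => ∏ i, f i (y i)) (∏ i, a i) := by
  induction k with
  | zero => simp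
  | succ k ih =>
    have ht := ih (fun i => f i.succ) (fun i => a i.succ) (fun i => hf i.succ)
      (fun i => h i.succ)
    have hs := (h 0).mul_nonneg_prod ht (hf 0)
      (fun y => prod_nonneg fun i _ => hf i.succ (y i))
    rw [Fin.prod_univ_succ, ← (Fin.consEquiv fun _ => ℕ).hasSum_iff]
    convert hs using 2 with p
    simp [Fin.prod_univ_succ, Fin.consEquiv]

/-- For `lam, μ > 0` this is the expectation of a single likelihood ratio under the Poisson null.
The identity itself only needs `m > 0`: the terms are those of
an exponential series at `lam * μ / m`. -/
lemma hasSum_poi_tilt (lam μ : ℝ) {m : ℝ} (hm : 0 < m) :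
    HasSum (fun n => poi lam n * (poi μ n / poi m n)) (exp ((lam / m - 1) * (μ - m))) := by
  have h := (NormedSpace.expSeries_div_hasSum_exp (lam * μ / m)).mul_left
    (exp (-lam) * exp (-μ) / exp (-m))
  rw [← Real.exp_eq_exp_ℝ, ← Real.exp_add, ← Real.exp_sub, ← Real.exp_add] at h
  have hterm : (fun n => poi lam n * (poi μ n / poi m n)) = fun n : ℕ =>
      exp (-lam + -μ - -m) * ((lam * μ / m) ^ n / (Nat.factorial n : ℝ)) := by
    funext n
    rw [Real.exp_sub, Real.exp_add, div_pow, mul_pow]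
    unfold poi
    have := Nat.factorial_ne_zero n
    field_simp
  have hval : (lam / m - 1) * (μ - m) = -lam + -μ - -m + lam * μ / m := by
    field_simp
    ring
  rw [hterm, hval]
  exact h

/-- the `k`-sample Poisson likelihood ratio statistic (product of
`poi(μ_i, y_i)/poi(μ̄, y_i)` with `μ̄` the average of the `μ_i`) has expectation exactly
`1` under every i.i.d. Poisson(λ) null. -/
theorem poisson_ksample_likelihood_ratio_expectation_eq_one
    (k : ℕ) (hk : 1 ≤ k) (lam : ℝ) (hlam : 0 < lam)
    (μ : Fin k → ℝ) (hμ : ∀ i, 0 < μ i) :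
    ∑' y : Fin k → ℕ,
      (∏ i, poi lam (y i)) *
        (∏ i, poi (μ i) (y i) / poi ((∑ i, μ i) / k) (y i)) = 1 := by
  have hk0 : (0 : ℝ) < k := by exact_mod_cast hk
  have : Nonempty (Fin k) := ⟨⟨0, hk⟩⟩
  have hm : 0 < (∑ i, μ i) / k :=
    div_pos (sum_pos (fun i _ => hμ i) univ_nonempty) hk0
  have hpoi : ∀ {θ : ℝ}, 0 < θ → ∀ n, 0 ≤ poi θ n := fun hθ n => by
    unfold poi; positivity
  have h := hasSum_pi_prod _ _
    (fun i n => mul_nonneg (hpoi hlam n) (div_nonneg (hpoi (hμ i) n) (hpoi hm n)))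
    (fun i => hasSum_poi_tilt lam (μ i) hm)
  have hdev : ∑ i, (μ i - (∑ j, μ j) / k) = 0 := by
    rw [sum_sub_distrib, sum_const, card_univ, Fintype.card_fin, nsmul_eq_mul,
      mul_div_cancel₀ _ hk0.ne', sub_self]
  rw [← Real.exp_sum, ← mul_sum, hdev, mul_zero, Real.exp_zero] at h
  simpa only [prod_mul_distrib] using h.tsum_eq
end

section
/- Fix k ≥ 1, σ > 0, λ ∈ ℝ, and μ_1, …, μ_k ∈ ℝ, and set μ̄ = (μ_1 + … + μ_k)/k. Let φ_{m,v}(y) := (2πv)^{−1/2} exp(−(y − m)²/(2v)) denote the Gaussian density with mean m and variance v > 0. Then the k-sample Gaussian-location likelihood ratio statistic has expectation exactly 1 under every i.i.d. Gaussian null: ∫_{ℝ^k} (∏_{i=1}^k φ_{λ,σ²}(y_i)) · (∏_{i=1}^k φ_{μ_i,σ²}(y_i) / φ_{μ̄,σ²}(y_i)) dy = 1. -/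
/-!
The integrand is a product over coordinates, so the integral factors into one-dimensional ones.
In one coordinate, `φ_λ φ_a / φ_b` is again an unnormalised Gaussian density: completing the square,
`(y - λ)² + (y - a)² - (y - b)² = (y - (λ + a - b))² + 2 (a - b) (b - λ)`,
so it integrates to `exp (-(a - b) (b - λ) / v)` (`integral_gauss_mul_div`). With `a = μ i` and
`b` the average of the `μ i`, these exponents are a constant multiple of `μ i - b`, hence sum to
zero, and the product of the exponentials is `1`.
-/

open Real Finset MeasureTheory

/-- The density of the normal distribution with mean `m` and variance `v`. -/
noncomputable def gauss (m v y : ℝ) : ℝ :=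
  Real.exp (-(y - m) ^ 2 / (2 * v)) / Real.sqrt (2 * Real.pi * v)

theorem gauss_eq_gaussianPDFReal (m y : ℝ) {v : ℝ} (hv : 0 < v) :
    gauss m v y = ProbabilityTheory.gaussianPDFReal m ⟨v, hv.le⟩ y := by
  simp only [gauss, ProbabilityTheory.gaussianPDFReal]
  rw [div_eq_inv_mul]
  rfl

theorem integral_gauss (m : ℝ) {v : ℝ} (hv : 0 < v) : ∫ y, gauss m v y = 1 := by
  simp_rw [gauss_eq_gaussianPDFReal m _ hv]
  exact ProbabilityTheory.integral_gaussianPDFReal_eq_one m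
    (fun h => hv.ne' (congrArg NNReal.toReal h))

/-- Completing the square: the product of a Gaussian density with a ratio of two Gaussian densities
of the same variance is a multiple of a shifted Gaussian density. -/
theorem gauss_mul_div (l a b y : ℝ) {v : ℝ} (hv : 0 < v) :
    gauss l v y * (gauss a v y / gauss b v y) =
      exp (-((a - b) * (b - l) / v)) * gauss (l + a - b) v y := by
  have hs : sqrt (2 * π * v) ≠ 0 := by positivity
  unfold gauss
  rw [div_div_div_cancel_right₀ hs, ← exp_sub, div_mul_eq_mul_div, ← exp_add, mul_div_assoc',
    ← exp_add]
  congr 2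
  field_simp
  ring

theorem integral_gauss_mul_div (l a b : ℝ) {v : ℝ} (hv : 0 < v) :
    ∫ y, gauss l v y * (gauss a v y / gauss b v y) = exp (-((a - b) * (b - l) / v)) := by
  simp_rw [gauss_mul_div l a b _ hv]
  rw [integral_const_mul, integral_gauss _ hv, mul_one]

/-- the `k`-sample Gaussian-location likelihood ratio statistic (product of
`φ_{μ_i,σ²}(y_i)/φ_{μ̄,σ²}(y_i)` with `μ̄` the average of the `μ_i`) has expectation
exactly `1` under every i.i.d. `N(λ, σ²)` null. -/
theorem gaussian_ksample_likelihood_ratio_expectation_eq_one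
    (k : ℕ) (hk : 1 ≤ k) (σ : ℝ) (hσ : 0 < σ) (lam : ℝ) (μ : Fin k → ℝ) :
    ∫ y : Fin k → ℝ,
      (∏ i, gauss lam (σ ^ 2) (y i)) *
        (∏ i, gauss (μ i) (σ ^ 2) (y i) / gauss ((∑ i, μ i) / k) (σ ^ 2) (y i)) = 1 := by
  have hv : 0 < σ ^ 2 := by positivity
  have hk0 : (k : ℝ) ≠ 0 := by positivity
  simp_rw [← Finset.prod_mul_distrib]
  rw [integral_fintype_prod_volume_eq_prod (fun i y => gauss lam (σ ^ 2) y *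
    (gauss (μ i) (σ ^ 2) y / gauss ((∑ i, μ i) / k) (σ ^ 2) y))]
  simp_rw [integral_gauss_mul_div lam _ _ hv]
  rw [← exp_sum, exp_eq_one_iff, Finset.sum_neg_distrib, ← Finset.sum_div, ← Finset.sum_mul]
  have hsum : ∑ i, (μ i - (∑ i, μ i) / k) = 0 := by
    rw [Finset.sum_sub_distrib, Finset.sum_const, Finset.card_univ, Fintype.card_fin,
      nsmul_eq_mul, mul_div_cancel₀ _ hk0, sub_self]
  rw [hsum, zero_mul, zero_div, neg_zero]
end

section
/- Fix k ≥ 1, let m_1, …, m_k ∈ (0,1) and set m̄ = (m_1 + … + m_k)/k. Then for every r ∈ (0,1): Σ_{y ∈ {0,1}^k} (∏_{i=1}^k r^{y_i}(1−r)^{1−y_i}) · (∏_{i=1}^k m_i^{y_i}(1−m_i)^{1−y_i} / (m̄^{y_i}(1−m̄)^{1−y_i})) ≤ 1. That is, the k-sample Bernoulli likelihood ratio between the product of Bernoulli(m_i) and the i.i.d. Bernoulli(m̄) null is an e-variable for the full i.i.d. Bernoulli null hypothesis. -/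
/-!
The likelihood ratio is a product over coordinates, so its expectation under the i.i.d.
`Bernoulli(r)` law factorises as `∏ i, x i` with
`x i = r * m i / m̄ + (1 - r) * (1 - m i) / (1 - m̄)`. The `x i` are nonnegative and, because `m̄` is
the average of the `m i`, they have average `1`; by AM-GM their product is at most `1`.
-/

open Real Finset

/-- The Bernoulli(m) probability mass function `m^y (1−m)^{1−y}` at `y ∈ {0,1}`. -/
noncomputable def bern (m : ℝ) (y : ℕ) : ℝ := m ^ y * (1 - m) ^ (1 - y)

/-- The form of AM-GM needed here, from `x ≤ exp (x - 1)` in each factor. -/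
lemma prod_le_one_of_sum_eq_card {ι : Type*} [Fintype ι] (x : ι → ℝ) (h0 : ∀ i, 0 ≤ x i)
    (hs : ∑ i, x i = Fintype.card ι) : ∏ i, x i ≤ 1 := by
  calc ∏ i, x i ≤ ∏ i, Real.exp (x i - 1) :=
        Finset.prod_le_prod (fun i _ => h0 i) fun i _ => by
          linarith [Real.add_one_le_exp (x i - 1)]
    _ = 1 := by
        rw [← Real.exp_sum, Finset.sum_sub_distrib, hs]
        simp

/-- the `k`-sample Bernoulli likelihood ratio between the product of
`Bernoulli(m_i)` and the i.i.d. `Bernoulli(m̄)` null (with `m̄` the average of the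
`m_i`) has expectation at most `1` under every i.i.d. `Bernoulli(r)` null, i.e. it is
an e-variable for the full i.i.d. Bernoulli null hypothesis. -/
theorem bernoulli_ksample_likelihood_ratio_is_evariable
    (k : ℕ) (hk : 1 ≤ k) (m : Fin k → ℝ) (hm : ∀ i, m i ∈ Set.Ioo (0 : ℝ) 1)
    (r : ℝ) (hr : r ∈ Set.Ioo (0 : ℝ) 1) :
    ∑ y : Fin k → Fin 2,
      (∏ i, bern r (y i : ℕ)) *
        (∏ i, bern (m i) (y i : ℕ) / bern ((∑ i, m i) / k) (y i : ℕ)) ≤ 1 := by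
  obtain ⟨hr0, hr1⟩ := hr
  have hk0 : (0 : ℝ) < k := by exact_mod_cast hk
  have hne : (Finset.univ : Finset (Fin k)).Nonempty := ⟨⟨0, hk⟩, Finset.mem_univ _⟩
  set M : ℝ := (∑ i, m i) / k with hM
  have hsum : ∑ i, m i = k * M := by rw [hM]; field_simp
  have hM0 : 0 < M := div_pos (Finset.sum_pos (fun i _ => (hm i).1) hne) hk0
  have hM1 : 0 < 1 - M := by
    have hlt : ∑ i, m i < ∑ _i : Fin k, (1 : ℝ) :=
      Finset.sum_lt_sum_of_nonempty hne fun i _ => (hm i).2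
    have : M < 1 := by
      rw [hM, div_lt_one hk0]
      simpa using hlt
    linarith
  have key : ∑ y : Fin k → Fin 2,
      (∏ i, bern r (y i : ℕ)) * (∏ i, bern (m i) (y i : ℕ) / bern M (y i : ℕ))
      = ∏ i, (r * m i / M + (1 - r) * (1 - m i) / (1 - M)) := by
    simp_rw [← Finset.prod_mul_distrib]
    rw [← Fintype.prod_sum
      (fun i (b : Fin 2) => bern r (b : ℕ) * (bern (m i) (b : ℕ) / bern M (b : ℕ)))]
    refine Finset.prod_congr rfl fun i _ => ?_
    simp [Fin.sum_univ_two, bern]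
    ring
  rw [key]
  refine prod_le_one_of_sum_eq_card _ (fun i => ?_) ?_
  · have h1 := (hm i).1
    have h2 : 0 < 1 - m i := by linarith [(hm i).2]
    have h3 : 0 < 1 - r := by linarith
    positivity
  · rw [Finset.sum_add_distrib, ← Finset.sum_div, ← Finset.sum_div, ← Finset.mul_sum,
      ← Finset.mul_sum, Finset.sum_sub_distrib, hsum]
    simp only [Finset.sum_const, Finset.card_univ, Fintype.card_fin, nsmul_eq_mul, mul_one]
    field_simp
    ring
end

section
/- Let d ≥ 2 and 1 ≤ d₀ < d, let Σ be a symmetric positive definite d×d real matrix, and let μ* ∈ ℝ^d. Let φ_{m,Σ}(x) := (2π)^{−d/2} det(Σ)^{−1/2} exp(−(1/2)(x−m)ᵀΣ^{−1}(x−m)) denote the multivariate Gaussian density with mean m and covariance Σ. Suppose ν̃ ∈ ℝ^d satisfies ν̃_i = 0 for all i ≤ d₀ and (Σ^{−1}(ν̃ − μ*))_j = 0 for all j > d₀ (so that N(ν̃, Σ) is the reverse information projection of N(μ*, Σ) onto the constrained null). Then for every ν ∈ ℝ^d with ν_i = 0 for all i ≤ d₀: ∫_{ℝ^d} φ_{ν,Σ}(x)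 · φ_{μ*,Σ}(x)/φ_{ν̃,Σ}(x) dx = 1. In particular, φ_{μ*,Σ}(X)/φ_{ν̃,Σ}(X) is an e-variable for the null hypothesis {N(ν, Σ) : ν_1 = … = ν_{d₀} = 0}. -/
/-!
The likelihood ratio tilts `φ_{ν,Σ}` into another Gaussian density. With
`u = ν - ν̃` and `w = μ* - ν̃`, expanding the quadratic forms in the three exponents gives
`φ_{ν,Σ} · φ_{μ*,Σ} / φ_{ν̃,Σ} = exp(uᵀ Σ⁻¹ w) · φ_{ν + w,Σ}`, of which `mgauss_mul_div` is the
case `uᵀ Σ⁻¹ w = 0`. Here `u` vanishes on the first `d₀` coordinates while `Σ⁻¹ w` vanishes on the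
remaining ones, so `uᵀ Σ⁻¹ w = 0` and the product is exactly the density of `N(ν + μ* - ν̃, Σ)`.
That a Gaussian density integrates to one (`integral_mgauss`) follows by factoring `Σ⁻¹ = Aᵀ A` and
substituting `z = A (x - m)`, which reduces the integral to a power of the one-dimensional one.
-/

open Real MeasureTheory Matrix

/-- The density of the `d`-variate normal distribution with mean `m` and symmetric
positive definite covariance matrix `S`. -/
noncomputable def mgauss {d : ℕ} (m : Fin d → ℝ) (S : Matrix (Fin d) (Fin d) ℝ)
    (x : Fin d → ℝ) : ℝ :=
  Real.exp (-(1 / 2) * ((x - m) ⬝ᵥ (S⁻¹ *ᵥ (x - m))))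
    / Real.sqrt ((2 * Real.pi) ^ d * S.det)

open scoped MatrixOrder in
/-- A positive definite matrix has an inverse of the form `Aᵀ A` with `A` invertible. -/
lemma exists_inv_eq_transpose_mul_self {d : ℕ} {S : Matrix (Fin d) (Fin d) ℝ} (hS : S.PosDef) :
    ∃ A : Matrix (Fin d) (Fin d) ℝ, S⁻¹ = Aᵀ * A ∧ A.det ≠ 0 := by
  obtain ⟨A, hA⟩ := CStarAlgebra.nonneg_iff_eq_star_mul_self.mp hS.inv.posSemidef.nonneg
  rw [star_eq_conjTranspose, conjTranspose_eq_transpose_of_trivial] at hA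
  refine ⟨A, hA, fun h => hS.inv.det_pos.ne' ?_⟩
  rw [hA, det_mul, h, mul_zero]

/-- The integral of `exp (-‖z‖² / 2)` over `ℝ^d`. -/
lemma integral_exp_neg_half_dotProduct (d : ℕ) :
    ∫ z : Fin d → ℝ, Real.exp (-(1 / 2) * (z ⬝ᵥ z)) = Real.sqrt ((2 * Real.pi) ^ d) := by
  have h : ∀ z : Fin d → ℝ, Real.exp (-(1 / 2) * (z ⬝ᵥ z))
      = ∏ i, Real.exp (-(1 / 2) * (z i) ^ 2) := by
    intro z
    rw [← Real.exp_sum, ← Finset.mul_sum]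
    simp only [dotProduct, pow_two]
  simp_rw [h]
  rw [integral_fintype_prod_volume_eq_pow (fun t : ℝ => Real.exp (-(1 / 2) * t ^ 2)),
    integral_gaussian, Fintype.card_fin]
  rw [show Real.pi / (1 / 2) = 2 * Real.pi by ring]
  symm
  rw [Real.sqrt_eq_iff_mul_self_eq (by positivity) (by positivity), ← mul_pow,
    Real.mul_self_sqrt (by positivity)]

/-- The linear substitution `z = A x`. -/
lemma integral_exp_neg_half_mulVec {d : ℕ} {A : Matrix (Fin d) (Fin d) ℝ} (hA : A.det ≠ 0) :
    ∫ x : Fin d → ℝ, Real.exp (-(1 / 2) * ((A *ᵥ x) ⬝ᵥ (A *ᵥ x)))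
      = |A.det|⁻¹ * Real.sqrt ((2 * Real.pi) ^ d) := by
  have hc : Continuous fun z : Fin d → ℝ => Real.exp (-(1 / 2) * (z ⬝ᵥ z)) := by
    unfold dotProduct
    fun_prop
  have hm : Measurable (toLin' A) := (toLin' A).continuous_of_finiteDimensional.measurable
  have h := integral_map (μ := volume) hm.aemeasurable
    (hc.aestronglyMeasurable (μ := Measure.map (toLin' A) volume))
  rw [Real.map_matrix_volume_pi_eq_smul_volume_pi hA, integral_smul_measure,
    integral_exp_neg_half_dotProduct, ENNReal.toReal_ofReal (abs_nonneg _), abs_inv,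
    smul_eq_mul] at h
  simpa only [toLin'_apply] using h.symm

lemma integral_mgauss {d : ℕ} (m : Fin d → ℝ) {S : Matrix (Fin d) (Fin d) ℝ} (hS : S.PosDef) :
    ∫ x : Fin d → ℝ, mgauss m S x = 1 := by
  obtain ⟨A, hA, hdet⟩ := exists_inv_eq_transpose_mul_self hS
  have hq : ∀ x : Fin d → ℝ, x ⬝ᵥ (S⁻¹ *ᵥ x) = (A *ᵥ x) ⬝ᵥ (A *ᵥ x) := by
    intro x
    rw [hA, ← mulVec_mulVec, dotProduct_mulVec, vecMul_transpose]
  have hd : S.det = (|A.det|⁻¹) ^ 2 := by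
    have h : S.det⁻¹ = A.det ^ 2 := by
      rw [← Ring.inverse_eq_inv', ← det_nonsing_inv, hA, det_mul, det_transpose, pow_two]
    rw [inv_pow, sq_abs, ← h, inv_inv]
  unfold mgauss
  rw [integral_div,
    integral_sub_right_eq_self (fun x : Fin d → ℝ => Real.exp (-(1 / 2) * (x ⬝ᵥ (S⁻¹ *ᵥ x)))) m]
  simp_rw [hq]
  rw [integral_exp_neg_half_mulVec hdet, hd, Real.sqrt_mul (by positivity),
    Real.sqrt_sq (by positivity), mul_comm]
  exact div_self (by positivity)

/-- Exponential tilting: if `a - c` and `b - c` are orthogonal with respect to `S⁻¹`, then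
multiplying the density with mean `a` by the likelihood ratio of `b` against `c` merely shifts the
mean by `b - c`. -/
lemma mgauss_mul_div {d : ℕ} {S : Matrix (Fin d) (Fin d) ℝ} (hS : S.PosDef)
    (a b c x : Fin d → ℝ) (h : (a - c) ⬝ᵥ (S⁻¹ *ᵥ (b - c)) = 0) :
    mgauss a S x * (mgauss b S x / mgauss c S x) = mgauss (a + (b - c)) S x := by
  have hsymm : ∀ u v : Fin d → ℝ, u ⬝ᵥ (S⁻¹ *ᵥ v) = v ⬝ᵥ (S⁻¹ *ᵥ u) := by
    intro u v
    have ht : S⁻¹ᵀ = S⁻¹ := by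
      rw [← conjTranspose_eq_transpose_of_trivial]
      exact hS.inv.isHermitian
    rw [dotProduct_mulVec, ← mulVec_transpose, ht, dotProduct_comm]
  have hK : 0 < Real.sqrt ((2 * Real.pi) ^ d * S.det) :=
    Real.sqrt_pos.mpr (mul_pos (by positivity) hS.det_pos)
  unfold mgauss
  rw [div_div_div_cancel_right₀ hK.ne', div_mul_eq_mul_div, ← Real.exp_sub, ← Real.exp_add]
  congr 2
  -- every vector is expressed through `y = x - c`, `u = a - c` and `w = b - c`
  obtain ⟨y, rfl⟩ : ∃ y, x = y + c := ⟨x - c, by simp⟩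
  obtain ⟨u, rfl⟩ : ∃ u, a = u + c := ⟨a - c, by simp⟩
  obtain ⟨w, rfl⟩ : ∃ w, b = w + c := ⟨b - c, by simp⟩
  have e : y + c - (u + c + w) = y - u - w := by abel
  simp only [add_sub_cancel_right, add_sub_add_right_eq_sub, e] at h ⊢
  simp only [mulVec_sub, dotProduct_sub, sub_dotProduct]
  rw [hsymm u y, hsymm w y, hsymm w u, h]
  ring

/-- for the multivariate Gaussian location family with fixed covariance
`Σ` and null hypothesis constraining the first `d₀` coordinates of the mean to `0`:
if `ν̃` has its first `d₀` coordinates zero and `(Σ⁻¹(ν̃ − μ*))_j = 0` for `j > d₀`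
(so that `N(ν̃, Σ)` is the reverse information projection of `N(μ*, Σ)` onto the null),
then the likelihood ratio `φ_{μ*,Σ}/φ_{ν̃,Σ}` has expectation exactly `1` under every
element `N(ν, Σ)` of the null. -/
theorem constrained_gaussian_location_simple_evariable
    (d d₀ : ℕ) (hd : 2 ≤ d) (hd₀ : 1 ≤ d₀) (hd₀d : d₀ < d)
    (S : Matrix (Fin d) (Fin d) ℝ) (hS : S.PosDef)
    (μstar νt : Fin d → ℝ)
    (hνt₁ : ∀ i : Fin d, (i : ℕ) < d₀ → νt i = 0)
    (hνt₂ : ∀ j : Fin d, d₀ ≤ (j : ℕ) → (S⁻¹ *ᵥ (νt - μstar)) j = 0) :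
    ∀ ν : Fin d → ℝ, (∀ i : Fin d, (i : ℕ) < d₀ → ν i = 0) →
      ∫ x : Fin d → ℝ, mgauss ν S x * (mgauss μstar S x / mgauss νt S x) = 1 := by
  intro ν hν
  have horth : (ν - νt) ⬝ᵥ (S⁻¹ *ᵥ (μstar - νt)) = 0 := by
    refine Finset.sum_eq_zero fun i _ => ?_
    rcases lt_or_ge (i : ℕ) d₀ with hi | hi
    · rw [Pi.sub_apply, hν i hi, hνt₁ i hi, sub_zero, zero_mul]
    · rw [← neg_sub νt μstar, mulVec_neg, Pi.neg_apply, hνt₂ i hi, neg_zero, mul_zero]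
  simp_rw [mgauss_mul_div hS ν μstar νt _ horth]
  exact integral_mgauss _ hS
end

section
/- Let m ∈ ℝ and s > 0, and set σ*² = m² + s². Let φ_{m,v}(y) := (2πv)^{−1/2} exp(−(y − m)²/(2v)) denote the Gaussian density with mean m and variance v > 0. Then for every σ > 0: ∫_ℝ φ_{0,σ²}(x) · φ_{m,s²}(x)/φ_{0,σ*²}(x) dx ≤ 1. That is, the likelihood ratio between the N(m, s²) alternative and the element N(0, m² + s²) of the zero-mean Gaussian scale family (which matches the mean of the sufficient statistic X = U² under the alternative) is an e-variable for the entire Gaussian scale null hypothesis {N(0, σ²) : σ² > 0}. -/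
/-!
Write `a = s²`, `v = σ²`, `T = m² + s²` and `D = a T + v m²`. Completing the square, the integrand
is a constant times `exp (-b (x - c)²)` with `b = D / (2 v a T)` and `c = m v T / D`, so the
integral is an explicit Gaussian integral, equal to `√r * exp ((1 - r) / 2)` with `r = T² / D`;
the exponent takes this form because `D - T² = m² (v - T)`, which is where the moment matching
`T = m² + s²` enters. The bound is then `r ≤ exp (r - 1)`.
-/

open Real MeasureTheory

lemma sqrt_mul_exp_le_one (r : ℝ) : √r * rexp ((1 - r) / 2) ≤ 1 := by
  have h1 : √r ≤ rexp ((r - 1) / 2) := by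
    rw [Real.sqrt_le_left (Real.exp_pos _).le, ← Real.exp_nat_mul]
    have := Real.add_one_le_exp (r - 1)
    have e : ((2 : ℕ) : ℝ) * ((r - 1) / 2) = r - 1 := by push_cast; ring
    rw [e]; linarith
  calc √r * rexp ((1 - r) / 2) ≤ rexp ((r - 1) / 2) * rexp ((1 - r) / 2) := by gcongr
    _ = 1 := by rw [← Real.exp_add, ← Real.exp_zero]; congr 1; ring

/-- The integrand after completing the square in `x`. -/
lemma gauss_ratio_eq {m a v T D : ℝ} (ha : 0 < a) (hv : 0 < v) (hT : T = m ^ 2 + a)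
    (hD : D = a * T + v * m ^ 2) (x : ℝ) :
    gauss 0 v x * (gauss m a x / gauss 0 T x) =
      √(2 * π * T) / (√(2 * π * v) * √(2 * π * a)) * rexp ((1 - T ^ 2 / D) / 2) *
        rexp (-(D / (2 * v * a * T)) * (x - m * v * T / D) ^ 2) := by
  have hT0 : 0 < T := by rw [hT]; positivity
  have hD0 : 0 < D := by rw [hD]; positivity
  have hexp : rexp ((1 - T ^ 2 / D) / 2) *
        rexp (-(D / (2 * v * a * T)) * (x - m * v * T / D) ^ 2) =
      rexp (-(x - 0) ^ 2 / (2 * v)) * rexp (-(x - m) ^ 2 / (2 * a)) /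
        rexp (-(x - 0) ^ 2 / (2 * T)) := by
    rw [← Real.exp_add, ← Real.exp_add, ← Real.exp_sub]
    congr 1
    have h1 : D ≠ 0 := hD0.ne'
    have h2 : T ≠ 0 := hT0.ne'
    field_simp
    subst hD
    subst hT
    ring
  rw [mul_assoc, hexp]
  unfold gauss
  have : √(2 * π * T) ≠ 0 := by positivity
  have : √(2 * π * v) ≠ 0 := by positivity
  have : √(2 * π * a) ≠ 0 := by positivity
  field_simp

lemma integral_gauss_ratio {m a v T D : ℝ} (ha : 0 < a) (hv : 0 < v) (hT : T = m ^ 2 + a)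
    (hD : D = a * T + v * m ^ 2) :
    ∫ x : ℝ, gauss 0 v x * (gauss m a x / gauss 0 T x) =
      √(T ^ 2 / D) * rexp ((1 - T ^ 2 / D) / 2) := by
  have hT0 : 0 < T := by rw [hT]; positivity
  have hD0 : 0 < D := by rw [hD]; positivity
  simp_rw [gauss_ratio_eq ha hv hT hD]
  rw [integral_const_mul,
    integral_sub_right_eq_self (fun x : ℝ => rexp (-(D / (2 * v * a * T)) * x ^ 2)),
    integral_gaussian, mul_right_comm]
  congr 1
  rw [← Real.sqrt_mul (by positivity), ← Real.sqrt_div (by positivity),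
    ← Real.sqrt_mul (by positivity)]
  congr 1
  field_simp

/-- the likelihood ratio between the `N(m, s²)` alternative and the
element `N(0, m² + s²)` of the zero-mean Gaussian scale family (which matches the mean
of the sufficient statistic `X = U²` under the alternative) is an e-variable for the
whole Gaussian scale null hypothesis `{N(0, σ²) : σ² > 0}`. -/
theorem gaussian_scale_simple_evariable
    (m s : ℝ) (hs : 0 < s) :
    ∀ σ : ℝ, 0 < σ →
      ∫ x : ℝ, gauss 0 (σ ^ 2) x * (gauss m (s ^ 2) x / gauss 0 (m ^ 2 + s ^ 2) x) ≤ 1 := by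
  intro σ hσ
  rw [integral_gauss_ratio (by positivity) (by positivity) rfl rfl]
  exact sqrt_mul_exp_le_one _
end

section
/- Let n ≥ 1 and d ≥ 0 with n ≥ d+1, and let x_1, …, x_n ∈ ℝ^{d+1} (coordinates indexed 0, 1, …, d) span ℝ^{d+1}. Let φ_{m,v}(y) := (2πv)^{−1/2} exp(−(y − m)²/(2v)) denote the Gaussian density with mean m and variance v > 0. Let γ ∈ ℝ^{d+1} and σ > 0, and suppose γ⁰ ∈ ℝ^{d+1} and σ₀ > 0 satisfy: γ⁰_0 = 0; for every j ∈ {1, …, d}, Σ_{i=1}^n (⟨γ, x_i⟩ − ⟨γ⁰, x_i⟩) x_{i,j} = 0; and n σ₀² = n σ² + Σ_{i=1}^n ⟨γ, x_i⟩² − Σ_{i=1}^n ⟨γ⁰, x_i⟩² (the normal equations defining the reverse information projection of the linear-model alternative onto the null with zeroth coefficient 0). Then for every γ' ∈ ℝ^{d+1} with γ'_0 = 0 and every σ' > 0: ∫_{ℝ^n} (∏_{i=1}^n φ_{⟨γ',x_i⟩, σ'²}(y_i)) · (∏_{i=1}^n φ_{⟨γ,x_i⟩, σ²}(y_i)) /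 (∏_{i=1}^n φ_{⟨γ⁰,x_i⟩, σ₀²}(y_i)) dy ≤ 1. That is, the simple likelihood ratio g_{σ,γ}(Y^n)/g_{σ₀,γ⁰}(Y^n) is an e-variable for the linear regression null hypothesis in which the regression coefficient of covariate 0 is zero and the noise variance is a free parameter. -/
/-!
Write `μ`, `ν`, `m` for the mean vectors belonging to `γ`, `γ₀`, `γ'`, and `b = σ²`, `c = σ₀²`,
`a = σ'²`. The integrand is a product over coordinates, each factor being the exponential of a
quadratic in `yᵢ` with leading coefficient `-Q / (2abc)`, where `Q = bc + a(c - b)`. Completing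
the square (`gauss_ratio_eq`, `integral_gauss_ratio`) evaluates the `i`-th integral as
`√(c² / Q) * exp (-(hᵢ²(c - b) + δᵢ²(c - a) - 2 hᵢ δᵢ c) / (2Q))` with `h = m - ν`, `δ = μ - ν`.

The normal equations say that `δ` is orthogonal to every null mean vector
(`sum_residual_mul_eq_zero`), hence to `h`, and turn the variance equation into
`∑ δᵢ² = n (c - b)`; in particular `b ≤ c` and `Q > 0`. As `(c - b)(c - a) = c² - Q`, the total
exponent is at most `-n (c² / Q - 1) / 2`, which cancels `√(c² / Q) ^ n` because of
`log r ≤ r - 1` at `r = c² / Q`.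
-/

open Real Finset Matrix MeasureTheory

/-- Completing the square in one coordinate of the likelihood ratio times the null density. -/
lemma gauss_ratio_eq_s19 {a b c m μ ν : ℝ} (ha : 0 < a) (hb : 0 < b) (hc : 0 < c)
    (hQ : 0 < b * c + a * (c - b)) (y : ℝ) :
    gauss m a y * (gauss μ b y / gauss ν c y) =
      (√(2 * π * c) / (√(2 * π * a) * √(2 * π * b)) *
        exp (-((m - ν) ^ 2 * (c - b) + (μ - ν) ^ 2 * (c - a) - 2 * ((m - ν) * (μ - ν)) * c)
          / (2 * (b * c + a * (c - b))))) *
      exp (-((b * c + a * (c - b)) / (2 * a * b * c)) *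
        (y - (ν + ((m - ν) * b + (μ - ν) * a) * c / (b * c + a * (c - b)))) ^ 2) := by
  have h1 : exp (-(y - m) ^ 2 / (2 * a)) * (exp (-(y - μ) ^ 2 / (2 * b)) /
        exp (-(y - ν) ^ 2 / (2 * c))) =
      exp (-((m - ν) ^ 2 * (c - b) + (μ - ν) ^ 2 * (c - a) - 2 * ((m - ν) * (μ - ν)) * c)
          / (2 * (b * c + a * (c - b)))) *
      exp (-((b * c + a * (c - b)) / (2 * a * b * c)) *
        (y - (ν + ((m - ν) * b + (μ - ν) * a) * c / (b * c + a * (c - b)))) ^ 2) := by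
    rw [← Real.exp_sub, ← Real.exp_add, ← Real.exp_add]
    congr 1
    have := hQ.ne'
    field_simp
    ring
  have ea : √(2 * π * a) ≠ 0 := by positivity
  have eb : √(2 * π * b) ≠ 0 := by positivity
  have ec : √(2 * π * c) ≠ 0 := by positivity
  rw [mul_assoc, ← h1]
  unfold gauss
  have := (Real.exp_pos (-(y - ν) ^ 2 / (2 * c))).ne'
  field_simp

lemma integral_gauss_ratio_s19 {a b c m μ ν : ℝ} (ha : 0 < a) (hb : 0 < b) (hc : 0 < c)
    (hQ : 0 < b * c + a * (c - b)) :
    ∫ y, gauss m a y * (gauss μ b y / gauss ν c y) =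
      √(c ^ 2 / (b * c + a * (c - b))) *
        exp (-((m - ν) ^ 2 * (c - b) + (μ - ν) ^ 2 * (c - a) - 2 * ((m - ν) * (μ - ν)) * c)
          / (2 * (b * c + a * (c - b)))) := by
  simp_rw [gauss_ratio_eq_s19 ha hb hc hQ]
  rw [integral_const_mul,
    integral_sub_right_eq_self (fun y : ℝ =>
      exp (-((b * c + a * (c - b)) / (2 * a * b * c)) * y ^ 2)),
    integral_gaussian, mul_right_comm]
  congr 1
  rw [← Real.sqrt_mul (by positivity), ← Real.sqrt_div (by positivity),
    ← Real.sqrt_mul (by positivity)]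
  congr 1
  have := hQ.ne'
  field_simp

/-- The residual of the normal equations is orthogonal to the mean vectors of the null. -/
lemma sum_residual_mul_eq_zero {n d : ℕ} {x : Fin n → (Fin (d + 1) → ℝ)} {δ : Fin n → ℝ}
    (hδ : ∀ j : Fin (d + 1), j ≠ 0 → ∑ i, δ i * x i j = 0)
    {w : Fin (d + 1) → ℝ} (hw : w 0 = 0) :
    ∑ i, δ i * (w ⬝ᵥ x i) = 0 := by
  simp only [dotProduct, Finset.mul_sum]
  rw [Finset.sum_comm]
  refine Finset.sum_eq_zero fun j _ => ?_
  by_cases hj : j = 0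
  · simp [hj, hw]
  · calc ∑ i, δ i * (w j * x i j) = w j * ∑ i, δ i * x i j := by
          rw [Finset.mul_sum]
          exact Finset.sum_congr rfl fun i _ => by ring
      _ = 0 := by rw [hδ j hj, mul_zero]

/-- The inequality `log r ≤ r - 1`, halved and exponentiated. -/
lemma sqrt_le_exp_half_sub_one (r : ℝ) : √r ≤ exp ((r - 1) / 2) := by
  rw [Real.exp_half]
  exact Real.sqrt_le_sqrt (by linarith [Real.add_one_le_exp (r - 1)])

/-- in the Gaussian linear model with covariates `x_1, …, x_n ∈ ℝ^{d+1}`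
spanning `ℝ^{d+1}` (with `n ≥ d+1`), if `(σ₀, γ⁰)` is obtained from the alternative
parameters `(σ, γ)` via the normal equations (so `N(⟨γ⁰, x_i⟩, σ₀²)` is the reverse
information projection of the alternative onto the null with zeroth coefficient `0`),
then the simple likelihood ratio `g_{σ,γ}(Y^n)/g_{σ₀,γ⁰}(Y^n)` has expectation at most
`1` under every null distribution `g_{σ',γ'}` with `γ'_0 = 0` and `σ' > 0`; i.e. it is
an e-variable for the linear regression null hypothesis in which the regression
coefficient of covariate `0` is zero and the noise variance is free. -/
theorem linear_model_simple_evariable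
    (n d : ℕ) (hn : 1 ≤ n) (hnd : d + 1 ≤ n)
    (x : Fin n → (Fin (d + 1) → ℝ))
    (hspan : Submodule.span ℝ (Set.range x) = ⊤)
    (γ : Fin (d + 1) → ℝ) (σ : ℝ) (hσ : 0 < σ)
    (γ₀ : Fin (d + 1) → ℝ) (σ₀ : ℝ) (hσ₀ : 0 < σ₀)
    (hγ₀0 : γ₀ 0 = 0)
    (hnormal : ∀ j : Fin (d + 1), j ≠ 0 →
      ∑ i, (γ ⬝ᵥ x i - γ₀ ⬝ᵥ x i) * x i j = 0)
    (hvar : (n : ℝ) * σ₀ ^ 2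
      = (n : ℝ) * σ ^ 2 + ∑ i, (γ ⬝ᵥ x i) ^ 2 - ∑ i, (γ₀ ⬝ᵥ x i) ^ 2) :
    ∀ (γ' : Fin (d + 1) → ℝ) (σ' : ℝ), γ' 0 = 0 → 0 < σ' →
      ∫ y : Fin n → ℝ,
        (∏ i, gauss (γ' ⬝ᵥ x i) (σ' ^ 2) (y i)) *
          ((∏ i, gauss (γ ⬝ᵥ x i) (σ ^ 2) (y i))
            / (∏ i, gauss (γ₀ ⬝ᵥ x i) (σ₀ ^ 2) (y i))) ≤ 1 := by
  intro γ' σ' hγ' hσ'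
  have o₀ := sum_residual_mul_eq_zero hnormal hγ₀0
  have o' := sum_residual_mul_eq_zero hnormal hγ'
  generalize hμ : (fun i => γ ⬝ᵥ x i) = μ at *
  generalize hν : (fun i => γ₀ ⬝ᵥ x i) = ν at *
  generalize hm : (fun i => γ' ⬝ᵥ x i) = m at *
  have eμ : ∀ i, γ ⬝ᵥ x i = μ i := fun i => congrFun hμ i
  have eν : ∀ i, γ₀ ⬝ᵥ x i = ν i := fun i => congrFun hν i
  have em : ∀ i, γ' ⬝ᵥ x i = m i := fun i => congrFun hm i
  simp only [eμ, eν, em] at o₀ o' hvar ⊢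
  obtain ⟨a, ha'⟩ : ∃ a, a = σ' ^ 2 := ⟨_, rfl⟩
  obtain ⟨b, hb'⟩ : ∃ b, b = σ ^ 2 := ⟨_, rfl⟩
  obtain ⟨c, hc'⟩ : ∃ c, c = σ₀ ^ 2 := ⟨_, rfl⟩
  have ha : 0 < a := by rw [ha']; positivity
  have hb : 0 < b := by rw [hb']; positivity
  have hc : 0 < c := by rw [hc']; positivity
  rw [← ha', ← hb', ← hc']
  rw [← hb', ← hc'] at hvar
  have hn' : (0 : ℝ) < n := by exact_mod_cast hn
  -- Pythagoras: `∑ μᵢ² - ∑ νᵢ² = ∑ δᵢ²`, since `δ` is orthogonal to `ν`.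
  have hD : ∑ i, (μ i - ν i) ^ 2 = n * (c - b) := by
    have : ∑ i, (μ i - ν i) ^ 2 =
        ∑ i, μ i ^ 2 - ∑ i, ν i ^ 2 - 2 * ∑ i, (μ i - ν i) * ν i := by
      rw [Finset.mul_sum, ← Finset.sum_sub_distrib, ← Finset.sum_sub_distrib]
      exact Finset.sum_congr rfl fun i _ => by ring
    rw [this, o₀]
    linarith
  have hcross : ∑ i, (m i - ν i) * (μ i - ν i) = 0 := by
    have : ∑ i, (m i - ν i) * (μ i - ν i) =
        ∑ i, (μ i - ν i) * m i - ∑ i, (μ i - ν i) * ν i := by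
      rw [← Finset.sum_sub_distrib]
      exact Finset.sum_congr rfl fun i _ => by ring
    rw [this, o₀, o', sub_zero]
  have hbc : 0 ≤ c - b := by
    have h : 0 ≤ (n : ℝ) * (c - b) := hD ▸ Finset.sum_nonneg fun i _ => sq_nonneg _
    exact nonneg_of_mul_nonneg_right h hn'
  have hQ : 0 < b * c + a * (c - b) := by positivity
  simp_rw [← Finset.prod_div_distrib, ← Finset.prod_mul_distrib]
  rw [integral_fintype_prod_volume_eq_prod
    (fun i y => gauss (m i) a y * (gauss (μ i) b y / gauss (ν i) c y))]
  simp_rw [integral_gauss_ratio_s19 ha hb hc hQ]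
  set Q := b * c + a * (c - b) with hQdef
  calc _ ≤ ∏ i, exp ((c ^ 2 / Q - 1) / 2 +
        -((m i - ν i) ^ 2 * (c - b) + (μ i - ν i) ^ 2 * (c - a)
          - 2 * ((m i - ν i) * (μ i - ν i)) * c) / (2 * Q)) := by
        refine Finset.prod_le_prod (fun i _ => by positivity) fun i _ => ?_
        rw [Real.exp_add]
        gcongr
        exact sqrt_le_exp_half_sub_one _
    _ = exp (-((∑ i, (m i - ν i) ^ 2) * (c - b)) / (2 * Q)) := by
        rw [← Real.exp_sum]
        congr 1
        rw [Finset.sum_add_distrib, ← Finset.sum_div, ← Finset.sum_div, Finset.sum_neg_distrib,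
          Finset.sum_sub_distrib, Finset.sum_sub_distrib, Finset.sum_add_distrib, ← Finset.sum_mul, ← Finset.sum_mul,
          ← Finset.sum_mul, ← Finset.mul_sum, hcross, hD]
        simp only [Finset.sum_const, Finset.card_univ, Fintype.card_fin, nsmul_eq_mul]
        have key : (c - b) * (c - a) = c ^ 2 - Q := by rw [hQdef]; ring
        rw [mul_assoc (n : ℝ), key]
        field_simp
        ring
    _ ≤ 1 := by
        rw [Real.exp_le_one_iff, neg_div, neg_nonpos]
        positivity
end
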